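/- arXiv:1211.2224 — 2 statements merged into one kernel-verified Lean document; each statement's English description precedes it below -/
import Mathlib

section
/- Let Ω = (0,h₁)×(0,h₂)×(0,h₃) with h₁,h₂,h₃ > 0 and Γ = ∂Ω ∩ {x₁ = 0} (one face of the parallelepiped). Then the sharp constant C₁(Ω,Γ) in the inequality ‖w‖_{L²(Ω)} ≤ C₁‖∇w‖_{L²(Ω)} for all w ∈ H̃¹(Ω,Γ) is equal to (1/π)·max{2h₁, h₂, h₃}. -/
open MeasureTheory Real

/-!
On an interval of length `r`, comparing `u'/u` with the solution `k tan (k (c - x))` of the Riccati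
equation gives `∫ u² ≤ (2r/π)² ∫ u'²` whenever `u` vanishes at one endpoint. Hence `u - u(c)` obeys
this bound on `[c - r, c + r]`: on an interval of length `h` the constant is `2h/π` for `c` an
endpoint and `h/π` for `c` the midpoint.

Inequalities in the separate variables combine without loss because, for any `ℓ` on a finite measure
space, `∫ (u - ⨍ ℓ)² ≤ ∫ (u - ⨍ u)² + ∫ (u - ℓ)²`: the first term is paid by the derivatives along
the slice, the second by the transversal one. Taking for `ℓ` the values on the middle slice and
inducting on the dimension gives the Poincaré inequality on a box with weights `(hᵢ/π)²`; taking
for `ℓ` the values on the face `x₀ = 0` in the last step replaces the weight of `∂₀` by `(2h₀/π)²`.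

The functions `sin (π x₀ / (2h₀))` and `cos (π xᵢ / hᵢ)`, `i ≠ 0`, show that no weight can be
lowered.
-/

section Interval

variable {a b c k r κ : ℝ} {u u' T : ℝ → ℝ}

/- Picone's identity `u'² - κ u² = (u' - T u)² + (T u²)'` for a solution `T` of the Riccati
equation. -/
lemma mul_integral_sq_add_le_of_riccati (hab : a ≤ b)
    (hu : ∀ x ∈ Set.Icc a b, HasDerivAt u (u' x) x) (hu' : ContinuousOn u' (Set.Icc a b))
    (hT : ∀ x ∈ Set.Icc a b, HasDerivAt T (-(κ + T x ^ 2)) x) :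
    κ * (∫ x in a..b, u x ^ 2) + (T b * u b ^ 2 - T a * u a ^ 2) ≤ ∫ x in a..b, u' x ^ 2 := by
  rw [← Set.uIcc_of_le hab] at hu hu' hT
  have hu_cont : ContinuousOn u (Set.uIcc a b) := HasDerivAt.continuousOn hu
  have hT_cont : ContinuousOn T (Set.uIcc a b) := HasDerivAt.continuousOn hT
  have hderiv : ∀ x ∈ Set.uIcc a b, HasDerivAt (fun x ↦ T x * u x ^ 2)
      (-(κ + T x ^ 2) * u x ^ 2 + T x * (2 * u x * u' x)) x := fun x hx ↦ by
    simpa using (hT x hx).fun_mul ((hu x hx).fun_pow 2)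
  have hint : IntervalIntegrable
      (fun x ↦ -(κ + T x ^ 2) * u x ^ 2 + T x * (2 * u x * u' x)) volume a b :=
    ContinuousOn.intervalIntegrable (by fun_prop)
  have hint_sq : IntervalIntegrable (fun x ↦ κ * u x ^ 2) volume a b :=
    ContinuousOn.intervalIntegrable (by fun_prop)
  rw [← intervalIntegral.integral_eq_sub_of_hasDerivAt hderiv hint,
    ← intervalIntegral.integral_const_mul, ← intervalIntegral.integral_add hint_sq hint]
  refine intervalIntegral.integral_mono_on hab (hint_sq.add hint)
    (ContinuousOn.intervalIntegrable (by fun_prop)) fun x _ ↦ ?_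
  linarith [sq_nonneg (u' x - T x * u x)]

lemma hasDerivAt_mul_tan_mul_sub {x : ℝ} (hx : cos (k * (c - x)) ≠ 0) :
    HasDerivAt (fun x ↦ k * tan (k * (c - x))) (-(k ^ 2 + (k * tan (k * (c - x))) ^ 2)) x := by
  have hlin : HasDerivAt (fun x ↦ k * (c - x)) (-k) x := by
    simpa using ((hasDerivAt_id x).const_sub c).const_mul k
  refine (((hasDerivAt_tan hx).comp x hlin).const_mul k).congr_deriv ?_
  rw [one_div, ← inv_one_add_tan_sq hx, inv_inv]
  ring

lemma sq_mul_integral_sq_le_of_mul_lt_pi_div_two (hab : a ≤ b)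
    (hu : ∀ x ∈ Set.Icc a b, HasDerivAt u (u' x) x) (hu' : ContinuousOn u' (Set.Icc a b))
    (hu₀ : u a = 0 ∨ u b = 0) (hk₀ : 0 ≤ k) (hk : k * (b - a) < π / 2) :
    k ^ 2 * ∫ x in a..b, u x ^ 2 ≤ ∫ x in a..b, u' x ^ 2 := by
  -- The barrier is centred at the endpoint where `u` is free.
  obtain ⟨c, hc, hTa, hTb⟩ : ∃ c ∈ Set.Icc a b,
      k * tan (k * (c - a)) * u a ^ 2 = 0 ∧ k * tan (k * (c - b)) * u b ^ 2 = 0 := by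
    rcases hu₀ with hua | hub
    · exact ⟨b, Set.right_mem_Icc.2 hab, by simp [hua], by simp⟩
    · exact ⟨a, Set.left_mem_Icc.2 hab, by simp, by simp [hub]⟩
  have hcos : ∀ x ∈ Set.Icc a b, cos (k * (c - x)) ≠ 0 := fun x hx ↦ by
    refine (cos_pos_of_mem_Ioo ⟨?_, ?_⟩).ne' <;> nlinarith [hx.1, hx.2, hc.1, hc.2]
  simpa [hTa, hTb] using mul_integral_sq_add_le_of_riccati hab hu hu'
    fun x hx ↦ hasDerivAt_mul_tan_mul_sub (hcos x hx)

theorem integral_sq_le_of_eq_zero_endpoint (hab : a ≤ b)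
    (hu : ∀ x ∈ Set.Icc a b, HasDerivAt u (u' x) x) (hu' : ContinuousOn u' (Set.Icc a b))
    (hu₀ : u a = 0 ∨ u b = 0) :
    ∫ x in a..b, u x ^ 2 ≤ (2 * (b - a) / π) ^ 2 * ∫ x in a..b, u' x ^ 2 := by
  rcases hab.eq_or_lt with rfl | hlt
  · simp
  have hlen : 0 < b - a := sub_pos.2 hlt
  have hK : 0 < π / (2 * (b - a)) := by positivity
  -- The barrier blows up at an endpoint for the critical `k = π / (2 (b - a))`, hence the limit.
  have hcrit : (π / (2 * (b - a))) ^ 2 * ∫ x in a..b, u x ^ 2 ≤ ∫ x in a..b, u' x ^ 2 := by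
    have hlim : Filter.Tendsto (fun k : ℝ ↦ k ^ 2 * ∫ x in a..b, u x ^ 2)
        (nhdsWithin (π / (2 * (b - a))) (Set.Iio (π / (2 * (b - a)))))
        (nhds ((π / (2 * (b - a))) ^ 2 * ∫ x in a..b, u x ^ 2)) :=
      (Continuous.tendsto (by fun_prop) _).mono_left nhdsWithin_le_nhds
    refine le_of_tendsto hlim ?_
    filter_upwards [Ioo_mem_nhdsLT hK] with k hk
    refine sq_mul_integral_sq_le_of_mul_lt_pi_div_two hab hu hu' hu₀ hk.1.le ?_
    calc k * (b - a) < π / (2 * (b - a)) * (b - a) := by gcongr; exact hk.2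
      _ = π / 2 := by field_simp
  calc ∫ x in a..b, u x ^ 2
      = (2 * (b - a) / π) ^ 2 * ((π / (2 * (b - a))) ^ 2 * ∫ x in a..b, u x ^ 2) := by field_simp
    _ ≤ (2 * (b - a) / π) ^ 2 * ∫ x in a..b, u' x ^ 2 := by gcongr

theorem integral_sub_apply_sq_le (hac : a ≤ c) (hcb : c ≤ b) (hca : c - a ≤ r) (hbc : b - c ≤ r)
    (hu : ∀ x ∈ Set.Icc a b, HasDerivAt u (u' x) x) (hu' : ContinuousOn u' (Set.Icc a b)) :
    ∫ x in a..b, (u x - u c) ^ 2 ≤ (2 * r / π) ^ 2 * ∫ x in a..b, u' x ^ 2 := by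
  have hleft : Set.Icc a c ⊆ Set.Icc a b := Set.Icc_subset_Icc_right hcb
  have hright : Set.Icc c b ⊆ Set.Icc a b := Set.Icc_subset_Icc_left hac
  have hu_cont : ContinuousOn u (Set.Icc a b) := HasDerivAt.continuousOn hu
  have hsplit : ∀ f : ℝ → ℝ, ContinuousOn f (Set.Icc a b) →
      (∫ x in a..c, f x) + ∫ x in c..b, f x = ∫ x in a..b, f x := fun f hf ↦
    intervalIntegral.integral_add_adjacent_intervals
      ((hf.mono hleft).intervalIntegrable_of_Icc hac)
      ((hf.mono hright).intervalIntegrable_of_Icc hcb)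
  rw [← hsplit _ (by fun_prop), ← hsplit _ (by fun_prop), mul_add]
  gcongr
  · grw [integral_sq_le_of_eq_zero_endpoint hac (fun x hx ↦ (hu x (hleft hx)).sub_const _)
      (hu'.mono hleft) (.inr (sub_self _))]
    gcongr
    exact intervalIntegral.integral_nonneg hac fun _ _ ↦ sq_nonneg _
  · grw [integral_sq_le_of_eq_zero_endpoint hcb (fun x hx ↦ (hu x (hright hx)).sub_const _)
      (hu'.mono hright) (.inl (sub_self _))]
    gcongr
    exact intervalIntegral.integral_nonneg hcb fun _ _ ↦ sq_nonneg _

end Interval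

section FiniteMeasure

variable {X Y : Type*} [MeasurableSpace X] [MeasurableSpace Y] {μ : Measure X} {ν : Measure Y}
  [IsFiniteMeasure μ] [IsFiniteMeasure ν] {u ℓ : Y → ℝ}

lemma integral_sub_const_sq (hu : MemLp u 2 ν) (c : ℝ) :
    ∫ y, (u y - c) ^ 2 ∂ν =
      ∫ y, (u y - ⨍ z, u z ∂ν) ^ 2 ∂ν + ν.real Set.univ * ((⨍ z, u z ∂ν) - c) ^ 2 := by
  set m := ⨍ z, u z ∂ν
  have hcentered : MemLp (fun y ↦ u y - m) 2 ν := hu.sub (memLp_const m)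
  have hmean : ∫ y, (u y - m) ∂ν = 0 := integral_sub_average ν u
  have hexpand : ∀ y, (u y - c) ^ 2 = (u y - m) ^ 2 + (2 * (m - c) * (u y - m) + (m - c) ^ 2) :=
    fun y ↦ by ring
  have hlin : Integrable (fun y ↦ 2 * (m - c) * (u y - m)) ν :=
    (hcentered.integrable one_le_two).const_mul _
  simp_rw [hexpand]
  rw [integral_add hcentered.integrable_sq (hlin.fun_add (integrable_const _)),
    integral_add hlin (integrable_const _), integral_const_mul, hmean, integral_const]
  simp

lemma integral_sub_average_sq_le (hu : MemLp u 2 ν) (c : ℝ) :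
    ∫ y, (u y - ⨍ z, u z ∂ν) ^ 2 ∂ν ≤ ∫ y, (u y - c) ^ 2 ∂ν := by
  rw [integral_sub_const_sq hu c]
  exact le_add_of_nonneg_right (by positivity)

lemma measureReal_univ_mul_average_sq_le (hu : MemLp u 2 ν) :
    ν.real Set.univ * (⨍ y, u y ∂ν) ^ 2 ≤ ∫ y, u y ^ 2 ∂ν := by
  have hvar : 0 ≤ ∫ y, (u y - ⨍ z, u z ∂ν) ^ 2 ∂ν := integral_nonneg fun _ ↦ sq_nonneg _
  simpa using (le_add_of_nonneg_left hvar).trans_eq (integral_sub_const_sq hu 0).symm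

lemma integral_sub_average_sq_le_add (hu : MemLp u 2 ν) (hℓ : MemLp ℓ 2 ν) :
    ∫ y, (u y - ⨍ z, ℓ z ∂ν) ^ 2 ∂ν ≤
      ∫ y, (u y - ⨍ z, u z ∂ν) ^ 2 ∂ν + ∫ y, (u y - ℓ y) ^ 2 ∂ν := by
  have hsub : (⨍ z, u z ∂ν) - ⨍ z, ℓ z ∂ν = ⨍ z, (u z - ℓ z) ∂ν := by
    simp only [average_eq, smul_eq_mul]
    rw [integral_sub (hu.integrable one_le_two) (hℓ.integrable one_le_two), mul_sub]
  rw [integral_sub_const_sq hu, hsub]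
  gcongr
  exact measureReal_univ_mul_average_sq_le (hu.sub hℓ)

theorem integral_prod_sub_average_sq_le_of_fibers {f V E : X × Y → ℝ}
    (hf : MemLp f 2 (μ.prod ν)) (hℓ : MemLp ℓ 2 ν)
    (hV : Integrable V (μ.prod ν)) (hE : Integrable E (μ.prod ν))
    (hfV : ∀ᵐ x ∂μ, ∫ y, (f (x, y) - ⨍ z, f (x, z) ∂ν) ^ 2 ∂ν ≤ ∫ y, V (x, y) ∂ν)
    (hfE : ∀ᵐ y ∂ν, ∫ x, (f (x, y) - ℓ y) ^ 2 ∂μ ≤ ∫ x, E (x, y) ∂μ) :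
    ∫ p, (f p - ⨍ y, ℓ y ∂ν) ^ 2 ∂μ.prod ν ≤ ∫ p, (E p + V p) ∂μ.prod ν := by
  have hconst : Integrable (fun p ↦ (f p - ⨍ y, ℓ y ∂ν) ^ 2) (μ.prod ν) :=
    (hf.sub (memLp_const _)).integrable_sq
  have hdiff : Integrable (fun p ↦ (f p - ℓ p.2) ^ 2) (μ.prod ν) :=
    (hf.sub (hℓ.comp_snd μ)).integrable_sq
  have hfibers : ∀ᵐ x ∂μ, MemLp (fun y ↦ f (x, y)) 2 ν := by
    filter_upwards [hf.1.prodMk_left, hf.integrable_sq.prod_right_ae] with x hmeas hsq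
      using (memLp_two_iff_integrable_sq hmeas).2 hsq
  calc ∫ p, (f p - ⨍ y, ℓ y ∂ν) ^ 2 ∂μ.prod ν
      = ∫ x, ∫ y, (f (x, y) - ⨍ y, ℓ y ∂ν) ^ 2 ∂ν ∂μ := integral_prod _ hconst
    _ ≤ ∫ x, (∫ y, V (x, y) ∂ν + ∫ y, (f (x, y) - ℓ y) ^ 2 ∂ν) ∂μ := by
        refine integral_mono_ae hconst.integral_prod_left
          (hV.integral_prod_left.add hdiff.integral_prod_left) ?_
        filter_upwards [hfibers, hfV] with x hx hxV
        exact (integral_sub_average_sq_le_add hx hℓ).trans (by gcongr)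
    _ = ∫ p, V p ∂μ.prod ν + ∫ y, ∫ x, (f (x, y) - ℓ y) ^ 2 ∂μ ∂ν := by
        rw [integral_add hV.integral_prod_left hdiff.integral_prod_left, integral_prod _ hV,
          integral_integral_swap (f := fun x y ↦ (f (x, y) - ℓ y) ^ 2) hdiff]
    _ ≤ ∫ p, V p ∂μ.prod ν + ∫ y, ∫ x, E (x, y) ∂μ ∂ν :=
        add_le_add le_rfl
          (integral_mono_ae hdiff.integral_prod_right hE.integral_prod_right hfE)
    _ = ∫ p, (E p + V p) ∂μ.prod ν := by
        rw [integral_add hE hV, integral_prod_symm _ hE, add_comm]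

end FiniteMeasure

section PartialDerivatives

variable {n : ℕ} {f : (Fin (n + 1) → ℝ) → ℝ}

lemma contDiff_comp_cons {m : WithTop ℕ∞} (hf : ContDiff ℝ m f) (t : ℝ) :
    ContDiff ℝ m fun y : Fin n → ℝ ↦ f (Fin.cons t y) :=
  hf.comp (contDiff_pi.2 (Fin.cases (by simpa using contDiff_const)
    fun i ↦ by simpa using contDiff_apply ℝ ℝ i))

lemma hasDerivAt_comp_cons (hf : Differentiable ℝ f) (t : ℝ) (y : Fin n → ℝ) :
    HasDerivAt (fun s : ℝ ↦ f (Fin.cons s y)) (fderiv ℝ f (Fin.cons t y) (Pi.single 0 1)) t := by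
  have hcons : HasDerivAt (fun s : ℝ ↦ (Fin.cons s y : Fin (n + 1) → ℝ)) (Pi.single 0 1) t :=
    hasDerivAt_pi.2 (Fin.cases (by simpa using hasDerivAt_id' t)
      fun i ↦ by simpa using hasDerivAt_const t (y i))
  exact (hf _).hasFDerivAt.comp_hasDerivAt t hcons

lemma fderiv_comp_cons_single (hf : Differentiable ℝ f) (t : ℝ) (y : Fin n → ℝ) (i : Fin n) :
    fderiv ℝ (fun z : Fin n → ℝ ↦ f (Fin.cons t z)) y (Pi.single i 1) =
      fderiv ℝ f (Fin.cons t y) (Pi.single i.succ 1) := by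
  have hline : ∀ s : ℝ, (Fin.cons t (y + s • Pi.single i 1) : Fin (n + 1) → ℝ) =
      Fin.cons t y + s • Pi.single i.succ 1 := fun s ↦
    funext (Fin.cases (by simp) fun j ↦ by simp [Pi.single_apply])
  rw [← (hf _).lineDeriv_eq_fderiv, ← DifferentiableAt.lineDeriv_eq_fderiv]
  · simp only [lineDeriv, hline]
  · exact (hf _).comp y (by fun_prop)

end PartialDerivatives

section Box

variable {ι : Type*} [Fintype ι]

/-- Lebesgue measure on the box `∏ᵢ (0, hᵢ)`, as a measure on `ι → ℝ`; the product form makes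
Fubini available coordinate by coordinate. -/
noncomputable def boxMeasure (h : ι → ℝ) : Measure (ι → ℝ) :=
  Measure.pi fun i ↦ volume.restrict (Set.Ioo 0 (h i))

instance (h : ι → ℝ) : IsFiniteMeasure (boxMeasure h) := by
  unfold boxMeasure
  infer_instance

lemma boxMeasure_eq_restrict (h : ι → ℝ) :
    boxMeasure h = volume.restrict (Set.univ.pi fun i ↦ Set.Ioo 0 (h i)) :=
  (Measure.restrict_pi_pi _ _).symm

lemma integrable_restrict_of_isBounded {E : Type*} [MetricSpace E] [ProperSpace E]
    [MeasurableSpace E] [OpensMeasurableSpace E] {μ : Measure E} [IsFiniteMeasureOnCompacts μ]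
    {f : E → ℝ} (hf : Continuous f) {s : Set E} (hs : Bornology.IsBounded s) :
    Integrable f (μ.restrict s) :=
  (hf.continuousOn.integrableOn_compact hs.isCompact_closure).mono_set subset_closure

lemma integrable_boxMeasure (h : ι → ℝ) {f : (ι → ℝ) → ℝ} (hf : Continuous f) :
    Integrable f (boxMeasure h) := by
  rw [boxMeasure_eq_restrict]
  exact integrable_restrict_of_isBounded hf (.pi fun i ↦ Metric.isBounded_Ioo 0 (h i))

lemma memLp_two_boxMeasure (h : ι → ℝ) {f : (ι → ℝ) → ℝ} (hf : Continuous f) :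
    MemLp f 2 (boxMeasure h) :=
  (memLp_two_iff_integrable_sq hf.aestronglyMeasurable).2 (integrable_boxMeasure h (hf.pow 2))

lemma integral_boxMeasure_comp_apply [DecidableEq ι] {h : ι → ℝ} (hh : ∀ i, 0 ≤ h i) (i : ι)
    {g : ℝ → ℝ} (hg : Continuous g) :
    ∫ x, g (x i) ∂boxMeasure h = (∏ j ∈ Finset.univ.erase i, h j) * ∫ t in 0..h i, g t := by
  have hmap : (boxMeasure h).map (Function.eval i) =
      (∏ j ∈ Finset.univ.erase i, (volume.restrict (Set.Ioo 0 (h j))) Set.univ) •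
        volume.restrict (Set.Ioo 0 (h i)) := Measure.pi_map_eval _ i
  have hint := integral_map (μ := boxMeasure h) (φ := Function.eval i)
    (measurable_pi_apply i).aemeasurable hg.aestronglyMeasurable
  rw [hmap, integral_smul_measure] at hint
  rw [intervalIntegral.integral_of_le (hh i), integral_Ioc_eq_integral_Ioo]
  simpa [ENNReal.toReal_prod, hh] using hint.symm

lemma integral_boxMeasure_fin_two (h : Fin 2 → ℝ) (f : (Fin 2 → ℝ) → ℝ) :
    ∫ y, f y ∂boxMeasure h =
      ∫ p in Set.Ioo 0 (h 0) ×ˢ Set.Ioo 0 (h 1), f ![p.1, p.2] := by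
  have hpre : MeasurableEquiv.finTwoArrow ⁻¹' Set.Ioo 0 (h 0) ×ˢ Set.Ioo 0 (h 1) =
      Set.univ.pi fun i ↦ Set.Ioo 0 (h i) := by
    ext y
    simp [Fin.forall_fin_two]
  rw [← (volume_preserving_finTwoArrow ℝ).setIntegral_preimage_emb
    (MeasurableEquiv.measurableEmbedding _), hpre, boxMeasure_eq_restrict]
  congr! 3
  ext i
  fin_cases i <;> rfl

variable {n : ℕ}

lemma coe_piFinSuccAbove_zero_symm {α : Type*} [MeasurableSpace α] :
    ⇑(MeasurableEquiv.piFinSuccAbove (fun _ : Fin (n + 1) ↦ α) 0).symm =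
      fun p ↦ Fin.cons p.1 p.2 := by
  ext p : 1
  exact Fin.insertNth_zero' p.1 p.2

lemma measurePreserving_cons_boxMeasure (h : Fin (n + 1) → ℝ) :
    MeasurePreserving (fun p : ℝ × (Fin n → ℝ) ↦ (Fin.cons p.1 p.2 : Fin (n + 1) → ℝ))
      ((volume.restrict (Set.Ioo 0 (h 0))).prod (boxMeasure (Fin.tail h))) (boxMeasure h) := by
  rw [← coe_piFinSuccAbove_zero_symm]
  exact (measurePreserving_piFinSuccAbove (fun i ↦ volume.restrict (Set.Ioo 0 (h i))) 0).symm

lemma integral_boxMeasure_succ (h : Fin (n + 1) → ℝ) (f : (Fin (n + 1) → ℝ) → ℝ) :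
    ∫ x, f x ∂boxMeasure h = ∫ p : ℝ × (Fin n → ℝ), f (Fin.cons p.1 p.2)
      ∂(volume.restrict (Set.Ioo 0 (h 0))).prod (boxMeasure (Fin.tail h)) := by
  refine ((measurePreserving_cons_boxMeasure h).integral_comp ?_ f).symm
  rw [← coe_piFinSuccAbove_zero_symm]
  exact MeasurableEquiv.measurableEmbedding _

theorem integral_boxMeasure_sub_average_slice_sq_le {h : Fin (n + 1) → ℝ} {c r : ℝ}
    (hc₀ : 0 ≤ c) (hch : c ≤ h 0) (hcr : c ≤ r) (hhr : h 0 - c ≤ r)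
    (hpoincare : ∀ g : (Fin n → ℝ) → ℝ, ContDiff ℝ 1 g →
      ∫ y, (g y - ⨍ z, g z ∂boxMeasure (Fin.tail h)) ^ 2 ∂boxMeasure (Fin.tail h) ≤
        ∫ y, ∑ i, (Fin.tail h i / π) ^ 2 * fderiv ℝ g y (Pi.single i 1) ^ 2
          ∂boxMeasure (Fin.tail h))
    {f : (Fin (n + 1) → ℝ) → ℝ} (hf : ContDiff ℝ 1 f) :
    ∫ x, (f x - ⨍ y, f (Fin.cons c y) ∂boxMeasure (Fin.tail h)) ^ 2 ∂boxMeasure h ≤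
      ∫ x, ∑ i, (Function.update h 0 (2 * r) i / π) ^ 2 * fderiv ℝ f x (Pi.single i 1) ^ 2
        ∂boxMeasure h := by
  have hf_cont : Continuous f := hf.continuous
  have hdiff : Differentiable ℝ f := hf.differentiable one_ne_zero
  have hpartial : ∀ i, Continuous fun x ↦ fderiv ℝ f x (Pi.single i 1) := fun i ↦
    (hf.continuous_fderiv one_ne_zero).clm_apply continuous_const
  have hcons := measurePreserving_cons_boxMeasure h
  rw [integral_boxMeasure_succ, integral_boxMeasure_succ]
  simp only [Fin.sum_univ_succ, Function.update_self, Function.update_of_ne (Fin.succ_ne_zero _)]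
  refine integral_prod_sub_average_sq_le_of_fibers
    (f := fun p : ℝ × (Fin n → ℝ) ↦ f (Fin.cons p.1 p.2)) (ℓ := fun y ↦ f (Fin.cons c y))
    (E := fun p ↦ (2 * r / π) ^ 2 * fderiv ℝ f (Fin.cons p.1 p.2) (Pi.single 0 1) ^ 2)
    (V := fun p ↦ ∑ i : Fin n,
      (h i.succ / π) ^ 2 * fderiv ℝ f (Fin.cons p.1 p.2) (Pi.single i.succ 1) ^ 2)
    ((memLp_two_boxMeasure h hf_cont).comp_measurePreserving hcons)
    (memLp_two_boxMeasure _ (contDiff_comp_cons hf c).continuous)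
    (hcons.integrable_comp_of_integrable (integrable_boxMeasure h (f := fun x ↦ ∑ i : Fin n,
      (h i.succ / π) ^ 2 * fderiv ℝ f x (Pi.single i.succ 1) ^ 2) (by fun_prop)))
    (hcons.integrable_comp_of_integrable (integrable_boxMeasure h (f := fun x ↦
      (2 * r / π) ^ 2 * fderiv ℝ f x (Pi.single 0 1) ^ 2) (by fun_prop)))
    (.of_forall fun t ↦ ?_) (.of_forall fun y ↦ ?_)
  · simpa only [fderiv_comp_cons_single hdiff, Fin.tail] using hpoincare _ (contDiff_comp_cons hf t)
  · have hcons_cont : Continuous fun t : ℝ ↦ (Fin.cons t y : Fin (n + 1) → ℝ) := by fun_prop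
    have hfiber := integral_sub_apply_sq_le hc₀ hch (by simpa using hcr) hhr
      (fun t _ ↦ hasDerivAt_comp_cons hdiff t y) ((hpartial 0).comp hcons_cont).continuousOn
    simpa only [intervalIntegral.integral_of_le (hc₀.trans hch), integral_Ioc_eq_integral_Ioo,
      integral_const_mul] using hfiber

theorem integral_boxMeasure_sub_average_sq_le {h : Fin n → ℝ} (hh : ∀ i, 0 ≤ h i)
    {f : (Fin n → ℝ) → ℝ} (hf : ContDiff ℝ 1 f) :
    ∫ x, (f x - ⨍ z, f z ∂boxMeasure h) ^ 2 ∂boxMeasure h ≤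
      ∫ x, ∑ i, (h i / π) ^ 2 * fderiv ℝ f x (Pi.single i 1) ^ 2 ∂boxMeasure h := by
  induction n with
  | zero =>
    have hprob : IsProbabilityMeasure (boxMeasure h) := by
      rw [boxMeasure, Measure.pi_of_empty]
      infer_instance
    have hconst : ∀ x, f x = f 0 := fun x ↦ congrArg f (Subsingleton.elim x 0)
    simp [hconst]
  | succ n ih =>
    have hmid : Function.update h 0 (2 * (h 0 / 2)) = h := by
      rw [mul_div_cancel₀ _ two_ne_zero, Function.update_eq_self]
    have hh₀ := hh 0
    have hslice := integral_boxMeasure_sub_average_slice_sq_le (c := h 0 / 2) (r := h 0 / 2)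
      (by linarith) (by linarith) le_rfl (by linarith) (fun g hg ↦ ih (fun i ↦ hh i.succ) hg) hf
    rw [hmid] at hslice
    exact (integral_sub_average_sq_le (memLp_two_boxMeasure h hf.continuous) _).trans hslice

end Box

section Trigonometric

variable {k ℓ : ℝ}

lemma integral_sin_mul_sq (hk : k ≠ 0) (hkℓ : sin (k * ℓ) * cos (k * ℓ) = 0) :
    ∫ t in 0..ℓ, sin (k * t) ^ 2 = ℓ / 2 := by
  rw [intervalIntegral.integral_comp_mul_left (fun t ↦ sin t ^ 2) hk, integral_sin_sq, hkℓ]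
  simp [mul_div_assoc, hk]

lemma integral_cos_mul_sq (hk : k ≠ 0) (hkℓ : sin (k * ℓ) * cos (k * ℓ) = 0) :
    ∫ t in 0..ℓ, cos (k * t) ^ 2 = ℓ / 2 := by
  rw [intervalIntegral.integral_comp_mul_left (fun t ↦ cos t ^ 2) hk, integral_cos_sq,
    mul_comm (cos _), hkℓ]
  simp [mul_div_assoc, hk]

end Trigonometric

section Gradient

variable {ι E : Type*} [Fintype ι] [NormedAddCommGroup E] [InnerProductSpace ℝ E]
  [CompleteSpace E]

lemma norm_gradient_sq_eq_sum (b : OrthonormalBasis ι ℝ E) (w : E → ℝ) (x : E) :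
    ‖gradient w x‖ ^ 2 = ∑ i, fderiv ℝ w x (b i) ^ 2 := by
  rw [gradient, LinearIsometryEquiv.norm_map, b.norm_dual]

lemma norm_gradient_toLp_sq [DecidableEq ι] (w : EuclideanSpace ℝ ι → ℝ) (y : ι → ℝ) :
    ‖gradient w (WithLp.toLp 2 y)‖ ^ 2 =
      ∑ i, fderiv ℝ (fun z ↦ w (WithLp.toLp 2 z)) y (Pi.single i 1) ^ 2 := by
  have hfderiv := (PiLp.continuousLinearEquiv 2 ℝ fun _ : ι ↦ ℝ).symm.comp_right_fderiv
    (f := w) (x := y)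
  have hcomp : (fun z ↦ w (WithLp.toLp 2 z)) =
    w ∘ (PiLp.continuousLinearEquiv 2 ℝ fun _ : ι ↦ ℝ).symm := rfl
  simp [norm_gradient_sq_eq_sum (EuclideanSpace.basisFun ι ℝ), hcomp, hfderiv]

lemma norm_gradient_comp_apply_sq {g : ℝ → ℝ} {g' : ℝ} {x : EuclideanSpace ℝ ι} {i : ι}
    (hg : HasDerivAt g g' (x i)) : ‖gradient (fun x ↦ g (x i)) x‖ ^ 2 = g' ^ 2 := by
  classical
  have hgrad : HasGradientAt (fun x : EuclideanSpace ℝ ι ↦ g (x i))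
      (EuclideanSpace.single i g') x := by
    rw [hasGradientAt_iff_hasFDerivAt]
    refine (hg.comp_hasFDerivAt x (EuclideanSpace.proj (𝕜 := ℝ) i).hasFDerivAt).congr_fderiv ?_
    ext v
    simp [EuclideanSpace.inner_single_left]
  simp [hgrad.gradient]

end Gradient

section OpenBox

variable {ι : Type*}

/-- The open box `∏ᵢ (0, hᵢ)` in Euclidean space. -/
def openBox (h : ι → ℝ) : Set (EuclideanSpace ℝ ι) :=
  {x | ∀ i, x i ∈ Set.Ioo 0 (h i)}

variable [Fintype ι]

lemma setIntegral_openBox (h : ι → ℝ) (f : EuclideanSpace ℝ ι → ℝ) :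
    ∫ x in openBox h, f x = ∫ y, f (WithLp.toLp 2 y) ∂boxMeasure h := by
  have hpre : WithLp.toLp 2 ⁻¹' openBox h = Set.univ.pi fun i ↦ Set.Ioo 0 (h i) := by
    ext y
    simp [openBox]
  rw [boxMeasure_eq_restrict, ← hpre, (PiLp.volume_preserving_toLp ι).setIntegral_preimage_emb
    (MeasurableEquiv.toLp 2 _).measurableEmbedding]

end OpenBox

section FacePoincare

variable {n : ℕ} {h : Fin (n + 1) → ℝ} {C M : ℝ}

/-- `C` is admissible in `‖w‖ ≤ C ‖∇w‖` on the box `∏ᵢ (0, hᵢ)` for the functions `w` of class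
`C¹` whose mean over the face `x₀ = 0` vanishes. -/
def FacePoincare (h : Fin (n + 1) → ℝ) (C : ℝ) : Prop :=
  ∀ w : EuclideanSpace ℝ (Fin (n + 1)) → ℝ, ContDiff ℝ 1 w →
    ∫ y, w (WithLp.toLp 2 (Fin.cons 0 y)) ∂boxMeasure (Fin.tail h) = 0 →
    √(∫ x in openBox h, w x ^ 2) ≤ C * √(∫ x in openBox h, ‖gradient w x‖ ^ 2)

theorem setIntegral_openBox_sq_le (hh : ∀ i, 0 ≤ h i)
    (hM : ∀ i, Function.update h 0 (2 * h 0) i ≤ M) {w : EuclideanSpace ℝ (Fin (n + 1)) → ℝ}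
    (hw : ContDiff ℝ 1 w)
    (hmean : ∫ y, w (WithLp.toLp 2 (Fin.cons 0 y)) ∂boxMeasure (Fin.tail h) = 0) :
    ∫ x in openBox h, w x ^ 2 ≤ (π⁻¹ * M) ^ 2 * ∫ x in openBox h, ‖gradient w x‖ ^ 2 := by
  set f : (Fin (n + 1) → ℝ) → ℝ := fun y ↦ w (WithLp.toLp 2 y)
  have hf : ContDiff ℝ 1 f := hw.comp PiLp.contDiff_toLp
  have hpartial : ∀ i, Continuous fun y ↦ fderiv ℝ f y (Pi.single i 1) := fun i ↦
    (hf.continuous_fderiv one_ne_zero).clm_apply continuous_const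
  have hweight : ∀ i, (Function.update h 0 (2 * h 0) i / π) ^ 2 ≤ (π⁻¹ * M) ^ 2 := fun i ↦ by
    have hi : 0 ≤ Function.update h 0 (2 * h 0) i :=
      Fin.cases (by simpa using hh 0) (fun i ↦ by simpa using hh i.succ) i
    rw [div_eq_inv_mul]
    gcongr
    exact hM i
  have hface := integral_boxMeasure_sub_average_slice_sq_le le_rfl (hh 0) (hh 0) (sub_zero _).le
    (fun g hg ↦ integral_boxMeasure_sub_average_sq_le (fun i ↦ hh i.succ) hg) hf
  rw [average_eq, hmean] at hface
  calc ∫ x in openBox h, w x ^ 2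
      = ∫ y, f y ^ 2 ∂boxMeasure h := setIntegral_openBox h _
    _ ≤ ∫ y, ∑ i, (Function.update h 0 (2 * h 0) i / π) ^ 2 * fderiv ℝ f y (Pi.single i 1) ^ 2
          ∂boxMeasure h := by simpa using hface
    _ ≤ ∫ y, (π⁻¹ * M) ^ 2 * ∑ i, fderiv ℝ f y (Pi.single i 1) ^ 2 ∂boxMeasure h := by
        refine integral_mono (integrable_boxMeasure h (by fun_prop))
          (integrable_boxMeasure h (by fun_prop)) fun y ↦ ?_
        simp only [Finset.mul_sum]
        exact Finset.sum_le_sum fun i _ ↦ mul_le_mul_of_nonneg_right (hweight i) (sq_nonneg _)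
    _ = (π⁻¹ * M) ^ 2 * ∫ x in openBox h, ‖gradient w x‖ ^ 2 := by
        simp only [setIntegral_openBox, norm_gradient_toLp_sq, integral_const_mul, f]

theorem facePoincare_of_le (hh : ∀ i, 0 ≤ h i)
    (hM : ∀ i, Function.update h 0 (2 * h 0) i ≤ M) : FacePoincare h (π⁻¹ * M) := by
  intro w hw hmean
  have hM₀ : 0 ≤ M := (mul_nonneg zero_le_two (hh 0)).trans (by simpa using hM 0)
  calc √(∫ x in openBox h, w x ^ 2)
      ≤ √((π⁻¹ * M) ^ 2 * ∫ x in openBox h, ‖gradient w x‖ ^ 2) :=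
        sqrt_le_sqrt (setIntegral_openBox_sq_le hh hM hw hmean)
    _ = π⁻¹ * M * √(∫ x in openBox h, ‖gradient w x‖ ^ 2) := by
        rw [sqrt_mul (sq_nonneg _), sqrt_sq (by positivity)]

theorem FacePoincare.inv_le_of_energy_eq (hC : FacePoincare h C) (hh : ∀ i, 0 < h i)
    (i : Fin (n + 1)) {g g' : ℝ → ℝ} (hg : ∀ t, HasDerivAt g (g' t) t) (hg' : Continuous g')
    (hmean : ∫ y, g ((Fin.cons 0 y : Fin (n + 1) → ℝ) i) ∂boxMeasure (Fin.tail h) = 0)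
    {k : ℝ} (hk : 0 < k) (hpos : 0 < ∫ t in 0..h i, g t ^ 2)
    (henergy : ∫ t in 0..h i, g' t ^ 2 = k ^ 2 * ∫ t in 0..h i, g t ^ 2) : k⁻¹ ≤ C := by
  have hg_smooth : ContDiff ℝ 1 g :=
    contDiff_one_iff_deriv.2 ⟨fun t ↦ (hg t).differentiableAt, by simpa [deriv_eq hg] using hg'⟩
  have hprod : 0 < ∏ j ∈ Finset.univ.erase i, h j := Finset.prod_pos fun j _ ↦ hh j
  have hineq := hC (fun x ↦ g (x i)) (by fun_prop) hmean
  have hh₀ : ∀ i, 0 ≤ h i := fun i ↦ (hh i).le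
  simp only [norm_gradient_comp_apply_sq (hg _), setIntegral_openBox] at hineq
  rw [integral_boxMeasure_comp_apply hh₀ i (g := fun t ↦ g t ^ 2) (by fun_prop),
    integral_boxMeasure_comp_apply hh₀ i (g := fun t ↦ g' t ^ 2) (by fun_prop), henergy,
    mul_left_comm, sqrt_mul (sq_nonneg k), sqrt_sq hk.le, ← mul_assoc,
    le_mul_iff_one_le_left (sqrt_pos.2 (mul_pos hprod hpos))] at hineq
  exact (inv_le_iff_one_le_mul₀ hk).2 hineq

theorem FacePoincare.inv_le_of_cos_eq_zero (hC : FacePoincare h C) (hh : ∀ i, 0 < h i) {k : ℝ}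
    (hk : 0 < k) (hcos : cos (k * h 0) = 0) : k⁻¹ ≤ C := by
  have hend : sin (k * h 0) * cos (k * h 0) = 0 := by rw [hcos, mul_zero]
  have hderiv : ∀ t, HasDerivAt (fun t ↦ sin (k * t)) (k * cos (k * t)) t := fun t ↦ by
    simpa [mul_comm] using ((hasDerivAt_id t).const_mul k).sin
  refine hC.inv_le_of_energy_eq hh 0 hderiv (by fun_prop) (by simp) hk ?_ ?_
  · rw [integral_sin_mul_sq hk.ne' hend]
    exact half_pos (hh 0)
  · simp [mul_pow, integral_sin_mul_sq hk.ne' hend, integral_cos_mul_sq hk.ne' hend]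

theorem FacePoincare.inv_le_of_sin_eq_zero (hC : FacePoincare h C) (hh : ∀ i, 0 < h i) {k : ℝ}
    (hk : 0 < k) {i : Fin n} (hsin : sin (k * h i.succ) = 0) : k⁻¹ ≤ C := by
  have hend : sin (k * h i.succ) * cos (k * h i.succ) = 0 := by rw [hsin, zero_mul]
  have hderiv : ∀ t, HasDerivAt (fun t ↦ cos (k * t)) (-k * sin (k * t)) t := fun t ↦ by
    simpa [mul_comm] using ((hasDerivAt_id t).const_mul k).cos
  have hmean : ∫ y : Fin n → ℝ, cos (k * y i) ∂boxMeasure (Fin.tail h) = 0 := by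
    rw [integral_boxMeasure_comp_apply (h := Fin.tail h) (fun j ↦ (hh j.succ).le) i
      (g := fun t ↦ cos (k * t)) (by fun_prop)]
    simp [Fin.tail, intervalIntegral.integral_comp_mul_left _ hk.ne', hsin]
  refine hC.inv_le_of_energy_eq hh i.succ hderiv (by fun_prop) (by simpa using hmean) hk ?_ ?_
  · rw [integral_cos_mul_sq hk.ne' hend]
    exact half_pos (hh i.succ)
  · simp [mul_pow, integral_sin_mul_sq hk.ne' hend, integral_cos_mul_sq hk.ne' hend]

lemma facePoincare_vec_iff {h₁ h₂ h₃ C : ℝ} : FacePoincare ![h₁, h₂, h₃] C ↔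
    ∀ w : EuclideanSpace ℝ (Fin 3) → ℝ, ContDiff ℝ 1 w →
      (∫ p in Set.Ioo (0 : ℝ) h₂ ×ˢ Set.Ioo (0 : ℝ) h₃, w !₂[0, p.1, p.2]) = 0 →
      √(∫ x in {x : EuclideanSpace ℝ (Fin 3) |
          x 0 ∈ Set.Ioo 0 h₁ ∧ x 1 ∈ Set.Ioo 0 h₂ ∧ x 2 ∈ Set.Ioo 0 h₃}, w x ^ 2) ≤
        C * √(∫ x in {x : EuclideanSpace ℝ (Fin 3) |
          x 0 ∈ Set.Ioo 0 h₁ ∧ x 1 ∈ Set.Ioo 0 h₂ ∧ x 2 ∈ Set.Ioo 0 h₃},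
          ‖gradient w x‖ ^ 2) := by
  have hbox : openBox ![h₁, h₂, h₃] =
      {x | x 0 ∈ Set.Ioo 0 h₁ ∧ x 1 ∈ Set.Ioo 0 h₂ ∧ x 2 ∈ Set.Ioo 0 h₃} := by
    ext x
    simp [openBox, Fin.forall_fin_succ]
  simp only [FacePoincare, integral_boxMeasure_fin_two, hbox]
  rfl

end FacePoincare

lemma ciSup_fin_three {α : Type*} [ConditionallyCompleteLattice α] (f : Fin 3 → α) :
    ⨆ i, f i = f 0 ⊔ (f 1 ⊔ f 2) :=
  eq_of_forall_ge_iff fun c ↦ by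
    simp [ciSup_le_iff (Set.finite_range f).bddAbove, Fin.forall_fin_succ]

theorem box_one_face_C1_general {n : ℕ} {h : Fin (n + 1) → ℝ} (hh : ∀ i, 0 < h i) :
    IsLeast {C | FacePoincare h C} (π⁻¹ * ⨆ i, Function.update h 0 (2 * h 0) i) := by
  refine ⟨facePoincare_of_le (fun i ↦ (hh i).le) (le_ciSup (Set.finite_range _).bddAbove), ?_⟩
  intro C hC
  have hnormal : 2 * h 0 / π ≤ C := by
    have h₀ := hh 0
    have hcos : cos (π / (2 * h 0) * h 0) = 0 := by
      rw [show π / (2 * h 0) * h 0 = π / 2 by field_simp, cos_pi_div_two]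
    simpa only [inv_div] using hC.inv_le_of_cos_eq_zero hh (by positivity) hcos
  have htangential : ∀ i : Fin n, h i.succ / π ≤ C := fun i ↦ by
    have hi := hh i.succ
    have hsin : sin (π / h i.succ * h i.succ) = 0 := by
      rw [div_mul_cancel₀ _ hi.ne', sin_pi]
    simpa only [inv_div] using hC.inv_le_of_sin_eq_zero hh (by positivity) hsin
  rw [Real.mul_iSup_of_nonneg (by positivity)]
  refine ciSup_le (Fin.cases ?_ fun i ↦ ?_)
  · simpa [div_eq_inv_mul] using hnormal
  · simpa [div_eq_inv_mul] using htangential i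

/-- The sharp constant `C₁(Ω,Γ)` in `‖w‖_{L²(Ω)} ≤ C₁ ‖∇w‖_{L²(Ω)}` for functions
with zero mean trace on `Γ`, where `Ω = (0,h₁) × (0,h₂) × (0,h₃)` and
`Γ = ∂Ω ∩ {x₁ = 0}` is one face of the parallelepiped, equals
`(1/π) · max {2h₁, h₂, h₃}`. -/
theorem box_one_face_C1 (h₁ h₂ h₃ : ℝ) (hh₁ : 0 < h₁) (hh₂ : 0 < h₂) (hh₃ : 0 < h₃) :
    IsLeast {C : ℝ |
      ∀ w : EuclideanSpace ℝ (Fin 3) → ℝ, ContDiff ℝ 1 w →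
        (∫ p in Set.Ioo (0:ℝ) h₂ ×ˢ Set.Ioo (0:ℝ) h₃, w !₂[0, p.1, p.2]) = 0 →
        Real.sqrt (∫ x in {x : EuclideanSpace ℝ (Fin 3) |
            x 0 ∈ Set.Ioo 0 h₁ ∧ x 1 ∈ Set.Ioo 0 h₂ ∧ x 2 ∈ Set.Ioo 0 h₃},
            (w x) ^ 2) ≤
          C * Real.sqrt (∫ x in {x : EuclideanSpace ℝ (Fin 3) |
            x 0 ∈ Set.Ioo 0 h₁ ∧ x 1 ∈ Set.Ioo 0 h₂ ∧ x 2 ∈ Set.Ioo 0 h₃},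
            ‖gradient w x‖ ^ 2)}
      (π⁻¹ * max (2 * h₁) (max h₂ h₃)) := by
  have hh : ∀ i, 0 < ![h₁, h₂, h₃] i := by simp [Fin.forall_fin_succ, hh₁, hh₂, hh₃]
  simpa [facePoincare_vec_iff, ciSup_fin_three] using box_one_face_C1_general hh
end

section
/- Let Ω = (−h₁/2, h₁/2)×(−h₂/2, h₂/2) with h₁,h₂ > 0 and Γ = ∂Ω (the whole boundary of the rectangle). Then the sharp constant C₁(Ω,Γ) in the inequality ‖w‖_{L²(Ω)} ≤ C₁‖∇w‖_{L²(Ω)} for all w ∈ H̃¹(Ω,Γ) is equal to (1/π)·max{h₁, h₂}. -/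
open MeasureTheory Real

/-!
Multiplying an antiperiodic function on `[a, b]` by `exp (π i x / (b - a))` makes it periodic and
shifts its Fourier frequencies to odd multiples of `π / (b - a)`, so Parseval gives
`∫ f² ≤ ((b - a) / π)² ∫ (df/dx)²`. On a rectangle of height `h` this is applied to
`u(x, ·) - p(x)`, where `p(x)` is the midpoint of the values of `u(x, ·)` on the two horizontal
sides, and to `μ - q`, where `μ(x)` is the mean of `u(x, ·)` and `q` the midpoint of the values
of `μ` on the two vertical sides. The two bounds add up because
`∫ (u - p)² dy + h (μ - q)² = ∫ u² dy + h (μ - p - q)² - 2 h p q` for every `x`, and `q ∫ p ≤ 0`: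
zero boundary mean makes the contributions of the two pairs of sides opposite. The half period of
the cosine in the direction of the longer side attains equality.
-/

section Wirtinger

theorem memLp_restrict_of_continuousOn {X E : Type*} [TopologicalSpace X] [T2Space X]
    [MeasurableSpace X] [OpensMeasurableSpace X] [NormedAddCommGroup E]
    [SecondCountableTopologyEither X E] {μ : Measure X} [IsFiniteMeasureOnCompacts μ]
    {s : Set X} (hs : IsCompact s) {f : X → E} (hf : ContinuousOn f s) (p : ENNReal) :
    MemLp f p (μ.restrict s) := by
  obtain ⟨M, hM⟩ := hs.exists_bound_of_continuousOn hf
  have : IsFiniteMeasure (μ.restrict s) :=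
    isFiniteMeasure_restrict.2 hs.measure_lt_top.ne
  exact MemLp.of_bound (hf.aestronglyMeasurable hs.measurableSet) M
    (ae_restrict_of_forall_mem hs.measurableSet hM)

theorem memLp_restrict_Ioc_of_continuousOn {E : Type*} [NormedAddCommGroup E] {μ : Measure ℝ}
    [IsFiniteMeasureOnCompacts μ] {a b : ℝ} {f : ℝ → E} (hf : ContinuousOn f (Set.Icc a b))
    (p : ENNReal) : MemLp f p (μ.restrict (Set.Ioc a b)) :=
  (memLp_restrict_of_continuousOn isCompact_Icc hf p).mono_measure
    (Measure.restrict_mono Set.Ioc_subset_Icc_self le_rfl)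

variable {a b : ℝ}

theorem fourier_coe_right_eq_left (n : ℤ) :
    fourier n (b : AddCircle (b - a)) = fourier n (a : AddCircle (b - a)) := by
  rw [← AddCircle.coe_add_period (b - a) a, add_sub_cancel]

theorem fourierCoeffOn_exp_mul_deriv (hab : a < b) {F F' : ℝ → ℂ} (κ : ℂ)
    (hF : ContinuousOn F (Set.Icc a b)) (hF' : ∀ x ∈ Set.Ioo a b, HasDerivAt F (F' x) x)
    (hint : IntervalIntegrable F' volume a b)
    (hper : Complex.exp (κ * b) * F b = Complex.exp (κ * a) * F a) (n : ℤ) :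
    fourierCoeffOn hab (fun x => Complex.exp (κ * x) * F' x) n =
      (2 * π * Complex.I * n / ((b - a : ℝ) : ℂ) - κ) *
        fourierCoeffOn hab (fun x => Complex.exp (κ * x) * F x) n := by
  set c : ℂ := 2 * π * Complex.I * n / ((b - a : ℝ) : ℂ) - κ with hc
  let φ : ℝ → ℂ := fun x => fourier (-n) (x : AddCircle (b - a)) * Complex.exp (κ * x)
  have hφ : ∀ x, HasDerivAt φ (-c * φ x) x := fun x => by
    have hexp : HasDerivAt (fun x : ℝ => Complex.exp (κ * x)) (Complex.exp (κ * x) * (κ * 1)) x :=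
      (Complex.ofRealCLM.hasDerivAt.const_mul κ).cexp
    refine ((hasDerivAt_fourier_neg (b - a) n x).mul hexp).congr_deriv ?_
    simp only [φ, hc]
    ring
  have hφc : Continuous φ := continuous_iff_continuousAt.2 fun x => (hφ x).continuousAt
  have boundary : φ b * F b = φ a * F a := by
    simp only [φ, mul_assoc, fourier_coe_right_eq_left, hper]
  have by_parts : ∫ x in a..b, φ x * F' x = c * ∫ x in a..b, φ x * F x := by
    have := intervalIntegral.integral_mul_deriv_eq_deriv_mul_of_hasDerivAt (u := φ) (v := F)
      (v' := F') hφc.continuousOn (by rwa [Set.uIcc_of_le hab.le]) (fun x _ => hφ x)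
      (by rwa [min_eq_left hab.le, max_eq_right hab.le])
      ((hφc.const_mul (-c)).intervalIntegrable a b) hint
    simpa only [boundary, sub_self, zero_sub, neg_mul, mul_assoc,
      intervalIntegral.integral_neg, intervalIntegral.integral_const_mul, neg_neg] using this
  simp only [fourierCoeffOn_eq_integral, smul_eq_mul, ← mul_assoc]
  rw [by_parts, mul_smul_comm]

theorem integral_norm_sq_le_of_norm_fourierCoeffOn_le (hab : a < b) {f g : ℝ → ℂ} {K : ℝ}
    (hf : MemLp f 2 (volume.restrict (Set.Ioc a b)))
    (hg : MemLp g 2 (volume.restrict (Set.Ioc a b)))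
    (hfg : ∀ n, ‖fourierCoeffOn hab f n‖ ≤ K * ‖fourierCoeffOn hab g n‖) :
    ∫ x in a..b, ‖f x‖ ^ 2 ≤ K ^ 2 * ∫ x in a..b, ‖g x‖ ^ 2 := by
  have hsq : ∀ n, ‖fourierCoeffOn hab f n‖ ^ 2 ≤ K ^ 2 * ‖fourierCoeffOn hab g n‖ ^ 2 :=
    fun n => by rw [← mul_pow]; exact pow_le_pow_left₀ (norm_nonneg _) (hfg n) 2
  have parseval := hasSum_le hsq (hasSum_sq_fourierCoeffOn hab hf)
    ((hasSum_sq_fourierCoeffOn hab hg).mul_left (K ^ 2))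
  rw [smul_eq_mul, smul_eq_mul, mul_left_comm] at parseval
  exact le_of_mul_le_mul_left parseval (inv_pos.2 (sub_pos.2 hab))

/-- The exponential whose frequency `π / (b - a)` is half of the fundamental one on `[a, b]`.
Multiplying by it turns antiperiodic functions into periodic ones and shifts the Fourier
frequencies to the odd multiples of `π / (b - a)`, none of which vanishes. -/
noncomputable def halfFrequencyExp (a b x : ℝ) : ℂ :=
  Complex.exp (π * Complex.I / ((b - a : ℝ) : ℂ) * x)

theorem continuous_halfFrequencyExp : Continuous (halfFrequencyExp a b) := by
  unfold halfFrequencyExp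
  fun_prop

theorem norm_halfFrequencyExp (x : ℝ) : ‖halfFrequencyExp a b x‖ = 1 := by
  have : π * Complex.I / ((b - a : ℝ) : ℂ) * x = (π / (b - a) * x : ℝ) * Complex.I := by
    push_cast
    ring
  rw [halfFrequencyExp, this, Complex.norm_exp_ofReal_mul_I]

theorem halfFrequencyExp_right (hab : a < b) :
    halfFrequencyExp a b b = -halfFrequencyExp a b a := by
  have hlen : ((b - a : ℝ) : ℂ) ≠ 0 := mod_cast (sub_pos.2 hab).ne'
  have : π * Complex.I / ((b - a : ℝ) : ℂ) * b =
      π * Complex.I / ((b - a : ℝ) : ℂ) * a + π * Complex.I := by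
    rw [← sub_eq_iff_eq_add', ← mul_sub, ← Complex.ofReal_sub, div_mul_cancel₀ _ hlen]
  rw [halfFrequencyExp, halfFrequencyExp, this, Complex.exp_add, Complex.exp_pi_mul_I, mul_neg_one]

theorem memLp_halfFrequencyExp_mul {μ : Measure ℝ} {p : ENNReal} {g : ℝ → ℂ} (hg : MemLp g p μ) :
    MemLp (fun x => halfFrequencyExp a b x * g x) p μ :=
  hg.congr_norm (continuous_halfFrequencyExp.aestronglyMeasurable.mul hg.1)
    (.of_forall fun x => by rw [norm_mul, norm_halfFrequencyExp, one_mul])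

theorem norm_fourierCoeffOn_halfFrequencyExp_mul_le (hab : a < b) {F F' : ℝ → ℂ}
    (hF : ContinuousOn F (Set.Icc a b)) (hF' : ∀ x ∈ Set.Ioo a b, HasDerivAt F (F' x) x)
    (hint : IntervalIntegrable F' volume a b) (hanti : F b = -F a) (n : ℤ) :
    ‖fourierCoeffOn hab (fun x => halfFrequencyExp a b x * F x) n‖ ≤
      (b - a) / π * ‖fourierCoeffOn hab (fun x => halfFrequencyExp a b x * F' x) n‖ := by
  have hlen : 0 < b - a := sub_pos.2 hab
  have hper : halfFrequencyExp a b b * F b = halfFrequencyExp a b a * F a := by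
    rw [halfFrequencyExp_right hab, hanti, neg_mul_neg]
  have hfreq : 2 * π * Complex.I * n / ((b - a : ℝ) : ℂ) - π * Complex.I / ((b - a : ℝ) : ℂ) =
      ((2 * n - 1 : ℤ) * (π / (b - a)) : ℝ) * Complex.I := by
    push_cast
    ring
  have hodd : (1 : ℝ) ≤ |((2 * n - 1 : ℤ) : ℝ)| := mod_cast Int.one_le_abs (by lia)
  rw [← inv_mul_le_iff₀ (div_pos hlen pi_pos), inv_div]
  simp only [halfFrequencyExp] at hper ⊢
  rw [fourierCoeffOn_exp_mul_deriv hab _ hF hF' hint hper, hfreq, norm_mul, norm_mul,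
    Complex.norm_I, mul_one, Complex.norm_real, norm_eq_abs, abs_mul,
    abs_of_pos (div_pos pi_pos hlen)]
  gcongr
  exact le_mul_of_one_le_left (by positivity) hodd

theorem integral_norm_sq_le_of_eq_neg (hab : a < b) {F F' : ℝ → ℂ}
    (hF : ContinuousOn F (Set.Icc a b)) (hF' : ∀ x ∈ Set.Ioo a b, HasDerivAt F (F' x) x)
    (hL2 : MemLp F' 2 (volume.restrict (Set.Ioc a b))) (hanti : F b = -F a) :
    ∫ x in a..b, ‖F x‖ ^ 2 ≤ ((b - a) / π) ^ 2 * ∫ x in a..b, ‖F' x‖ ^ 2 := by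
  have hF_L2 : MemLp F 2 (volume.restrict (Set.Ioc a b)) :=
    memLp_restrict_Ioc_of_continuousOn hF 2
  have hint : IntervalIntegrable F' volume a b :=
    (intervalIntegrable_iff_integrableOn_Ioc_of_le hab.le).2 (hL2.integrable one_le_two)
  simpa only [norm_mul, norm_halfFrequencyExp, one_mul] using
    integral_norm_sq_le_of_norm_fourierCoeffOn_le hab
      (memLp_halfFrequencyExp_mul (a := a) (b := b) hF_L2) (memLp_halfFrequencyExp_mul hL2)
      (norm_fourierCoeffOn_halfFrequencyExp_mul_le hab hF hF' hint hanti)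

theorem integral_sub_midpoint_sq_le (hab : a < b) {F F' : ℝ → ℝ}
    (hF : ContinuousOn F (Set.Icc a b)) (hF' : ∀ x ∈ Set.Ioo a b, HasDerivAt F (F' x) x)
    (hL2 : MemLp F' 2 (volume.restrict (Set.Ioc a b))) :
    ∫ x in a..b, (F x - (F a + F b) / 2) ^ 2 ≤
      ((b - a) / π) ^ 2 * ∫ x in a..b, F' x ^ 2 := by
  have := integral_norm_sq_le_of_eq_neg hab
    (F := fun x => ((F x - (F a + F b) / 2 : ℝ) : ℂ)) (F' := fun x => (F' x : ℂ))
    (Complex.continuous_ofReal.comp_continuousOn (hF.sub continuousOn_const))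
    (fun x hx => ((hF' x hx).sub_const _).ofReal_comp) hL2.ofReal (by push_cast; ring)
  simpa only [Complex.norm_real, norm_eq_abs, sq_abs] using this

end Wirtinger

section IntervalAverage

variable {a b : ℝ} {F : ℝ → ℝ}

theorem integral_sub_const_sq_s4 (hF : IntervalIntegrable F volume a b)
    (hF2 : IntervalIntegrable (fun x => F x ^ 2) volume a b) (p : ℝ) :
    ∫ x in a..b, (F x - p) ^ 2 =
      (∫ x in a..b, F x ^ 2) - 2 * p * (∫ x in a..b, F x) + (b - a) * p ^ 2 := by
  have expand : ∀ x, (F x - p) ^ 2 = F x ^ 2 - 2 * p * F x + p ^ 2 := fun x => by ring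
  simp only [expand]
  rw [intervalIntegral.integral_add (hF2.sub (hF.const_mul _)) intervalIntegrable_const,
    intervalIntegral.integral_sub hF2 (hF.const_mul _), intervalIntegral.integral_const_mul,
    intervalIntegral.integral_const, smul_eq_mul]

theorem sub_mul_interval_average (hab : a ≠ b) (F : ℝ → ℝ) :
    (b - a) * ⨍ x in a..b, F x = ∫ x in a..b, F x := by
  rw [interval_average_eq_div, mul_div_cancel₀ _ (sub_ne_zero.2 hab.symm)]

theorem sub_mul_sq_interval_average_le (hab : a < b) (hF : IntervalIntegrable F volume a b)
    (hF2 : IntervalIntegrable (fun x => F x ^ 2) volume a b) :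
    (b - a) * (⨍ x in a..b, F x) ^ 2 ≤ ∫ x in a..b, F x ^ 2 := by
  have variance_nonneg : 0 ≤ ∫ x in a..b, (F x - ⨍ x in a..b, F x) ^ 2 :=
    intervalIntegral.integral_nonneg hab.le fun _ _ => sq_nonneg _
  rw [integral_sub_const_sq_s4 hF hF2, ← sub_mul_interval_average hab.ne F] at variance_nonneg
  linarith

theorem integral_sq_le_add_average_sub_sq (hab : a < b) (hF : IntervalIntegrable F volume a b)
    (hF2 : IntervalIntegrable (fun x => F x ^ 2) volume a b) (p q : ℝ) :
    ∫ x in a..b, F x ^ 2 ≤ (∫ x in a..b, (F x - p) ^ 2) +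
      (b - a) * ((⨍ x in a..b, F x) - q) ^ 2 + 2 * (b - a) * q * p := by
  rw [integral_sub_const_sq_s4 hF hF2, ← sub_mul_interval_average hab.ne F]
  have := mul_nonneg (sub_pos.2 hab).le (sq_nonneg ((⨍ x in a..b, F x) - p - q))
  linarith

end IntervalAverage

section ParametricIntegral

variable {E : Type*} [NormedAddCommGroup E] [NormedSpace ℝ E] {f f' : ℝ → ℝ → E}

theorem hasDerivAt_intervalIntegral_of_continuous (a b : ℝ) (hf : ∀ x, Continuous (f x))
    (hf' : Continuous (Function.uncurry f'))
    (hderiv : ∀ x y, HasDerivAt (fun s => f s y) (f' x y) x) (x : ℝ) :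
    HasDerivAt (fun s => ∫ y in a..b, f s y) (∫ y in a..b, f' x y) x := by
  obtain ⟨M, hM⟩ := ((isCompact_closedBall x 1).prod
    (isCompact_uIcc (a := a) (b := b))).exists_bound_of_continuousOn hf'.continuousOn
  exact (intervalIntegral.hasDerivAt_integral_of_dominated_loc_of_deriv_le
    (bound := fun _ => M) (Metric.closedBall_mem_nhds x one_pos)
    (.of_forall fun s => (hf s).aestronglyMeasurable) ((hf x).intervalIntegrable a b)
    (hf'.uncurry_left x).aestronglyMeasurable
    (.of_forall fun y hy s hs => hM (s, y) ⟨hs, Set.uIoc_subset_uIcc hy⟩)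
    intervalIntegrable_const (.of_forall fun y _ s _ => hderiv s y)).2

theorem continuous_intervalAverage (a b : ℝ) (hf : Continuous (Function.uncurry f)) :
    Continuous fun x => ⨍ y in a..b, f x y := by
  simp only [interval_average_eq]
  exact (intervalIntegral.continuous_parametric_intervalIntegral_of_continuous' hf a b).const_smul _

theorem hasDerivAt_intervalAverage_of_continuous (a b : ℝ) (hf : ∀ x, Continuous (f x))
    (hf' : Continuous (Function.uncurry f'))
    (hderiv : ∀ x y, HasDerivAt (fun s => f s y) (f' x y) x) (x : ℝ) :
    HasDerivAt (fun s => ⨍ y in a..b, f s y) (⨍ y in a..b, f' x y) x := by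
  simp only [interval_average_eq]
  exact (hasDerivAt_intervalIntegral_of_continuous a b hf hf' hderiv x).const_smul _

end ParametricIntegral

section Rectangle

variable {A B C D : ℝ} {u u₁ u₂ : ℝ → ℝ → ℝ}

theorem integral_integral_sub_midpoint_sq_le (hAB : A ≤ B) (hCD : C < D)
    (hu : Continuous (Function.uncurry u)) (hu₂ : Continuous (Function.uncurry u₂))
    (hderiv : ∀ x y, HasDerivAt (u x) (u₂ x y) y) :
    ∫ x in A..B, ∫ y in C..D, (u x y - (u x C + u x D) / 2) ^ 2 ≤
      ((D - C) / π) ^ 2 * ∫ x in A..B, ∫ y in C..D, u₂ x y ^ 2 := by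
  rw [← intervalIntegral.integral_const_mul]
  refine intervalIntegral.integral_mono_on hAB ?_ ?_ fun x _ =>
    integral_sub_midpoint_sq_le hCD (hu.uncurry_left x).continuousOn (fun y _ => hderiv x y)
      (memLp_restrict_Ioc_of_continuousOn (hu₂.uncurry_left x).continuousOn 2)
  · refine Continuous.intervalIntegrable ?_ A B
    exact intervalIntegral.continuous_parametric_intervalIntegral_of_continuous' (by fun_prop) C D
  · refine Continuous.intervalIntegrable ?_ A B
    exact (intervalIntegral.continuous_parametric_intervalIntegral_of_continuous'
      (by fun_prop) C D).const_mul _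

theorem sub_mul_integral_average_sub_midpoint_sq_le (hAB : A < B) (hCD : C < D)
    (hu : Continuous (Function.uncurry u)) (hu₁ : Continuous (Function.uncurry u₁))
    (hderiv : ∀ x y, HasDerivAt (fun s => u s y) (u₁ x y) x) :
    (D - C) * ∫ x in A..B, ((⨍ y in C..D, u x y) -
        ((⨍ y in C..D, u A y) + ⨍ y in C..D, u B y) / 2) ^ 2 ≤
      ((B - A) / π) ^ 2 * ∫ x in A..B, ∫ y in C..D, u₁ x y ^ 2 := by
  have wirtinger := integral_sub_midpoint_sq_le hAB
    (continuous_intervalAverage C D hu).continuousOn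
    (fun x _ => hasDerivAt_intervalAverage_of_continuous C D hu.uncurry_left hu₁ hderiv x)
    (memLp_restrict_Ioc_of_continuousOn (continuous_intervalAverage C D hu₁).continuousOn 2)
  have jensen : ∫ x in A..B, (D - C) * (⨍ y in C..D, u₁ x y) ^ 2 ≤
      ∫ x in A..B, ∫ y in C..D, u₁ x y ^ 2 := by
    refine intervalIntegral.integral_mono_on hAB.le
      ((((continuous_intervalAverage C D hu₁).pow 2).const_mul _).intervalIntegrable A B)
      ((intervalIntegral.continuous_parametric_intervalIntegral_of_continuous'
        (by fun_prop) C D).intervalIntegrable A B) fun x _ =>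
      sub_mul_sq_interval_average_le hCD ((hu₁.uncurry_left x).intervalIntegrable C D)
        (((hu₁.uncurry_left x).pow 2).intervalIntegrable C D)
  rw [intervalIntegral.integral_const_mul] at jensen
  calc _ ≤ (D - C) * (((B - A) / π) ^ 2 * ∫ x in A..B, (⨍ y in C..D, u₁ x y) ^ 2) :=
        mul_le_mul_of_nonneg_left wirtinger (sub_pos.2 hCD).le
    _ = ((B - A) / π) ^ 2 * ((D - C) * ∫ x in A..B, (⨍ y in C..D, u₁ x y) ^ 2) := by ring
    _ ≤ _ := mul_le_mul_of_nonneg_left jensen (sq_nonneg _)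

theorem integral_integral_sq_le_add_average_sub_sq (hAB : A ≤ B) (hCD : C < D)
    (hu : Continuous (Function.uncurry u)) {p : ℝ → ℝ} (hp : Continuous p) (q : ℝ) :
    ∫ x in A..B, ∫ y in C..D, u x y ^ 2 ≤
      (∫ x in A..B, ∫ y in C..D, (u x y - p x) ^ 2) +
      (D - C) * (∫ x in A..B, ((⨍ y in C..D, u x y) - q) ^ 2) +
      2 * (D - C) * q * ∫ x in A..B, p x := by
  have hsq : IntervalIntegrable (fun x => ∫ y in C..D, u x y ^ 2) volume A B :=
    (intervalIntegral.continuous_parametric_intervalIntegral_of_continuous'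
      (by fun_prop) C D).intervalIntegrable A B
  have hsub : IntervalIntegrable (fun x => ∫ y in C..D, (u x y - p x) ^ 2) volume A B :=
    (intervalIntegral.continuous_parametric_intervalIntegral_of_continuous'
      (by fun_prop) C D).intervalIntegrable A B
  have havg : IntervalIntegrable (fun x => (D - C) * ((⨍ y in C..D, u x y) - q) ^ 2) volume A B :=
    ((((continuous_intervalAverage C D hu).sub continuous_const).pow 2).const_mul
      _).intervalIntegrable A B
  have hcross : IntervalIntegrable (fun x => 2 * (D - C) * q * p x) volume A B :=
    (hp.const_mul _).intervalIntegrable A B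
  rw [← intervalIntegral.integral_const_mul, ← intervalIntegral.integral_const_mul,
    ← intervalIntegral.integral_add hsub havg,
    ← intervalIntegral.integral_add (hsub.add havg) hcross]
  exact intervalIntegral.integral_mono_on hAB hsq ((hsub.add havg).add hcross) fun x _ =>
    integral_sq_le_add_average_sub_sq hCD ((hu.uncurry_left x).intervalIntegrable C D)
      (((hu.uncurry_left x).pow 2).intervalIntegrable C D) (p x) q

theorem integral_integral_sq_le_of_boundary (hAB : A < B) (hCD : C < D)
    (hu : Continuous (Function.uncurry u)) (hu₁ : Continuous (Function.uncurry u₁))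
    (hu₂ : Continuous (Function.uncurry u₂))
    (hderiv₁ : ∀ x y, HasDerivAt (fun s => u s y) (u₁ x y) x)
    (hderiv₂ : ∀ x y, HasDerivAt (u x) (u₂ x y) y)
    (hboundary : (∫ y in C..D, (u A y + u B y)) * (∫ x in A..B, (u x C + u x D)) ≤ 0) :
    ∫ x in A..B, ∫ y in C..D, u x y ^ 2 ≤
      ((B - A) / π) ^ 2 * (∫ x in A..B, ∫ y in C..D, u₁ x y ^ 2) +
      ((D - C) / π) ^ 2 * (∫ x in A..B, ∫ y in C..D, u₂ x y ^ 2) := by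
  set q := ((⨍ y in C..D, u A y) + ⨍ y in C..D, u B y) / 2 with hq
  have integral_sides : ∫ y in C..D, (u A y + u B y) = 2 * (D - C) * q := by
    rw [intervalIntegral.integral_add ((hu.uncurry_left A).intervalIntegrable C D)
      ((hu.uncurry_left B).intervalIntegrable C D), ← sub_mul_interval_average hCD.ne (u A),
      ← sub_mul_interval_average hCD.ne (u B), hq]
    ring
  have cross_term : 2 * (D - C) * q * ∫ x in A..B, (u x C + u x D) / 2 ≤ 0 := by
    rw [intervalIntegral.integral_div, ← integral_sides]
    linarith
  have hp : Continuous fun x => (u x C + u x D) / 2 := by fun_prop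
  have split := integral_integral_sq_le_add_average_sub_sq hAB.le hCD hu hp q
  have vertical := integral_integral_sub_midpoint_sq_le hAB.le hCD hu hu₂ hderiv₂
  have horizontal := sub_mul_integral_average_sub_midpoint_sq_le hAB hCD hu hu₁ hderiv₁
  linarith

end Rectangle

section EuclideanPlane

theorem norm_gradient_sq {ι : Type*} [Fintype ι] [DecidableEq ι] (w : EuclideanSpace ℝ ι → ℝ)
    (x : EuclideanSpace ℝ ι) :
    ‖gradient w x‖ ^ 2 = ∑ i, fderiv ℝ w x (EuclideanSpace.single i 1) ^ 2 := by
  rw [← (EuclideanSpace.basisFun ι ℝ).sum_sq_norm_inner_left]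
  simp only [EuclideanSpace.basisFun_apply, inner_gradient_left, norm_eq_abs, sq_abs]

theorem norm_gradient_comp_apply_sq_s4 {ι : Type*} [Fintype ι] {f : ℝ → ℝ} (i : ι)
    {x : EuclideanSpace ℝ ι} (hf : DifferentiableAt ℝ f (x i)) :
    ‖gradient (fun z : EuclideanSpace ℝ ι => f (z i)) x‖ ^ 2 = deriv f (x i) ^ 2 := by
  classical
  have hfderiv : HasFDerivAt (fun z : EuclideanSpace ℝ ι => f (z i))
      (deriv f (x i) • PiLp.proj 2 (fun _ => ℝ) i) x :=
    hf.hasDerivAt.comp_hasFDerivAt x (PiLp.hasFDerivAt_apply (𝕜 := ℝ) 2 x i)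
  rw [norm_gradient_sq, hfderiv.fderiv]
  simp

theorem hasDerivAt_comp_toLp_update {ι : Type*} [Finite ι] [DecidableEq ι]
    {w : EuclideanSpace ℝ ι → ℝ} (z : ι → ℝ) (i : ι) (t : ℝ)
    (hw : DifferentiableAt ℝ w (WithLp.toLp 2 (Function.update z i t))) :
    HasDerivAt (fun s => w (WithLp.toLp 2 (Function.update z i s)))
      (fderiv ℝ w (WithLp.toLp 2 (Function.update z i t)) (EuclideanSpace.single i 1)) t := by
  have := Fintype.ofFinite ι
  exact hw.hasFDerivAt.comp_hasDerivAt t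
    ((PiLp.hasFDerivAt_toLp (𝕜 := ℝ) 2 _).comp_hasDerivAt t (hasDerivAt_update z i t))

theorem continuous_fderiv_single {ι : Type*} [Fintype ι] [DecidableEq ι]
    {w : EuclideanSpace ℝ ι → ℝ} (i : ι) (hw : ContDiff ℝ 1 w) :
    Continuous fun x => fderiv ℝ w x (EuclideanSpace.single i 1) :=
  (hw.continuous_fderiv one_ne_zero).clm_apply continuous_const

variable {w : EuclideanSpace ℝ (Fin 2) → ℝ}

theorem hasDerivAt_comp_fst (hw : Differentiable ℝ w) (x y : ℝ) :
    HasDerivAt (fun s => w !₂[s, y]) (fderiv ℝ w !₂[x, y] (EuclideanSpace.single 0 1)) x := by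
  have hupdate : ∀ s, Function.update ![x, y] 0 s = ![s, y] := fun s => by
    ext i
    fin_cases i <;> rfl
  simpa only [hupdate] using hasDerivAt_comp_toLp_update ![x, y] 0 x (hw _)

theorem hasDerivAt_comp_snd (hw : Differentiable ℝ w) (x y : ℝ) :
    HasDerivAt (fun t => w !₂[x, t]) (fderiv ℝ w !₂[x, y] (EuclideanSpace.single 1 1)) y := by
  have hupdate : ∀ t, Function.update ![x, y] 1 t = ![x, t] := fun t => by
    ext i
    fin_cases i <;> rfl
  simpa only [hupdate] using hasDerivAt_comp_toLp_update ![x, y] 1 y (hw _)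

/-- The open rectangle `(A, B) × (C, D)` in the Euclidean plane. -/
def openRectangle (A B C D : ℝ) : Set (EuclideanSpace ℝ (Fin 2)) :=
  {x | x 0 ∈ Set.Ioo A B ∧ x 1 ∈ Set.Ioo C D}

variable {A B C D : ℝ} {E : Type*} [NormedAddCommGroup E] {f : EuclideanSpace ℝ (Fin 2) → E}

theorem integrableOn_openRectangle_of_continuous (hf : Continuous f) :
    IntegrableOn f (openRectangle A B C D) := by
  have hcompact : IsCompact
      ((fun z : ℝ × ℝ => !₂[z.1, z.2]) '' (Set.Icc A B ×ˢ Set.Icc C D)) :=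
    (isCompact_Icc.prod isCompact_Icc).image (by fun_prop)
  refine (hf.continuousOn.integrableOn_compact hcompact).mono_set fun x hx => ?_
  refine ⟨(x 0, x 1), ⟨Set.Ioo_subset_Icc_self hx.1, Set.Ioo_subset_Icc_self hx.2⟩, ?_⟩
  ext i
  fin_cases i <;> rfl

variable [NormedSpace ℝ E]

theorem setIntegral_openRectangle (hAB : A ≤ B) (hCD : C ≤ D)
    (hf : IntegrableOn f (openRectangle A B C D)) :
    ∫ x in openRectangle A B C D, f x = ∫ x in A..B, ∫ y in C..D, f !₂[x, y] := by
  let e : ℝ × ℝ ≃ᵐ EuclideanSpace ℝ (Fin 2) :=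
    MeasurableEquiv.finTwoArrow.symm.trans (MeasurableEquiv.toLp 2 (Fin 2 → ℝ))
  have he : MeasurePreserving e :=
    (PiLp.volume_preserving_toLp (Fin 2)).comp (volume_preserving_finTwoArrow ℝ).symm
  have hpre : e ⁻¹' openRectangle A B C D = Set.Ioo A B ×ˢ Set.Ioo C D := rfl
  have hint : IntegrableOn (f ∘ e) (Set.Ioo A B ×ˢ Set.Ioo C D) (volume.prod volume) :=
    hpre ▸ (he.integrableOn_comp_preimage e.measurableEmbedding).2 hf
  rw [← he.setIntegral_preimage_emb e.measurableEmbedding, hpre]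
  refine (setIntegral_prod _ hint).trans ?_
  simp only [intervalIntegral.integral_of_le hAB, intervalIntegral.integral_of_le hCD,
    integral_Ioc_eq_integral_Ioo]
  rfl

variable [CompleteSpace E]

theorem setIntegral_openRectangle_comp_fst (hAB : A ≤ B) (hCD : C ≤ D) {f : ℝ → E}
    (hf : Continuous f) :
    ∫ x in openRectangle A B C D, f (x 0) = (D - C) • ∫ x in A..B, f x := by
  rw [setIntegral_openRectangle hAB hCD
    (integrableOn_openRectangle_of_continuous (f := fun x => f (x 0)) (by fun_prop))]
  simp

theorem setIntegral_openRectangle_comp_snd (hAB : A ≤ B) (hCD : C ≤ D) {f : ℝ → E}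
    (hf : Continuous f) :
    ∫ x in openRectangle A B C D, f (x 1) = (B - A) • ∫ y in C..D, f y := by
  rw [setIntegral_openRectangle hAB hCD
    (integrableOn_openRectangle_of_continuous (f := fun x => f (x 1)) (by fun_prop))]
  simp

theorem integrableOn_openRectangle_fderiv_single_sq (i : Fin 2) (hw : ContDiff ℝ 1 w) :
    IntegrableOn (fun x => fderiv ℝ w x (EuclideanSpace.single i 1) ^ 2)
      (openRectangle A B C D) :=
  integrableOn_openRectangle_of_continuous ((continuous_fderiv_single i hw).pow 2)

theorem setIntegral_openRectangle_norm_gradient_sq (hw : ContDiff ℝ 1 w) :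
    ∫ x in openRectangle A B C D, ‖gradient w x‖ ^ 2 =
      (∫ x in openRectangle A B C D, fderiv ℝ w x (EuclideanSpace.single 0 1) ^ 2) +
      ∫ x in openRectangle A B C D, fderiv ℝ w x (EuclideanSpace.single 1 1) ^ 2 := by
  simp only [norm_gradient_sq, Fin.sum_univ_two]
  exact integral_add (integrableOn_openRectangle_fderiv_single_sq 0 hw)
    (integrableOn_openRectangle_fderiv_single_sq 1 hw)

end EuclideanPlane

section HalfWave

/-- The half period of the cosine stretched to `[a, b]`: the first nonconstant Neumann
eigenfunction of the interval. It takes opposite values at the endpoints and has mean zero. -/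
noncomputable def halfWave (a b x : ℝ) : ℝ :=
  cos (π / (b - a) * (x - a))

variable {a b : ℝ}

theorem contDiff_halfWave {n : WithTop ℕ∞} : ContDiff ℝ n (halfWave a b) := by
  unfold halfWave
  fun_prop

theorem deriv_halfWave (x : ℝ) :
    deriv (halfWave a b) x = -(π / (b - a)) * sin (π / (b - a) * (x - a)) := by
  have hphase : HasDerivAt (fun x => π / (b - a) * (x - a)) (π / (b - a) * 1) x :=
    ((hasDerivAt_id x).sub_const a).const_mul _
  rw [show halfWave a b = fun x => cos (π / (b - a) * (x - a)) from rfl, hphase.cos.deriv]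
  ring

theorem halfWave_left_add_right (hab : a < b) : halfWave a b a + halfWave a b b = 0 := by
  simp [halfWave, div_mul_cancel₀ π (sub_pos.2 hab).ne']

theorem integral_comp_pi_div_mul_sub {E : Type*} [NormedAddCommGroup E] [NormedSpace ℝ E]
    (hab : a < b) (f : ℝ → E) :
    ∫ x in a..b, f (π / (b - a) * (x - a)) = ((b - a) / π) • ∫ t in 0..π, f t := by
  have hlen : b - a ≠ 0 := (sub_pos.2 hab).ne'
  rw [intervalIntegral.integral_comp_sub_right (fun x => f (π / (b - a) * x)),
    intervalIntegral.integral_comp_mul_left f (div_ne_zero pi_ne_zero hlen), sub_self, mul_zero,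
    div_mul_cancel₀ π hlen, inv_div]

theorem integral_halfWave (hab : a < b) : ∫ x in a..b, halfWave a b x = 0 := by
  simp only [halfWave]
  rw [integral_comp_pi_div_mul_sub hab cos]
  simp

theorem integral_halfWave_sq (hab : a < b) : ∫ x in a..b, halfWave a b x ^ 2 = (b - a) / 2 := by
  simp only [halfWave]
  rw [integral_comp_pi_div_mul_sub hab fun t => cos t ^ 2, integral_cos_sq]
  simp only [sin_zero, cos_zero, sin_pi, cos_pi, smul_eq_mul]
  field_simp
  ring

theorem integral_deriv_halfWave_sq (hab : a < b) :
    ∫ x in a..b, deriv (halfWave a b) x ^ 2 = (π / (b - a)) ^ 2 * ((b - a) / 2) := by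
  simp only [deriv_halfWave, mul_pow, neg_sq, intervalIntegral.integral_const_mul]
  rw [integral_comp_pi_div_mul_sub hab fun t => sin t ^ 2, integral_sin_sq]
  simp only [sin_zero, cos_zero, sin_pi, cos_pi, smul_eq_mul]
  field_simp
  ring

end HalfWave

section BoundaryPoincare

/-- The integral of `w` over the boundary of the rectangle `[A, B] × [C, D]`, with opposite
sides paired. -/
noncomputable def boundaryIntegral (A B C D : ℝ) (w : EuclideanSpace ℝ (Fin 2) → ℝ) : ℝ :=
  (∫ t in C..D, (w !₂[A, t] + w !₂[B, t])) + ∫ s in A..B, (w !₂[s, C] + w !₂[s, D])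

/-- `K` is an admissible constant in the Poincaré inequality on the rectangle `(A, B) × (C, D)`
for `C¹` functions on the plane with zero mean on its boundary. -/
def IsBoundaryPoincareConst (A B C D K : ℝ) : Prop :=
  ∀ w : EuclideanSpace ℝ (Fin 2) → ℝ, ContDiff ℝ 1 w → boundaryIntegral A B C D w = 0 →
    √(∫ x in openRectangle A B C D, w x ^ 2) ≤
      K * √(∫ x in openRectangle A B C D, ‖gradient w x‖ ^ 2)

variable {A B C D K : ℝ}

theorem setIntegral_openRectangle_sq_le_add_of_boundaryIntegral_eq_zero (hAB : A < B)
    (hCD : C < D) {w : EuclideanSpace ℝ (Fin 2) → ℝ} (hw : ContDiff ℝ 1 w)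
    (hmean : boundaryIntegral A B C D w = 0) :
    ∫ x in openRectangle A B C D, w x ^ 2 ≤
      ((B - A) / π) ^ 2 *
        (∫ x in openRectangle A B C D, fderiv ℝ w x (EuclideanSpace.single 0 1) ^ 2) +
      ((D - C) / π) ^ 2 *
        ∫ x in openRectangle A B C D, fderiv ℝ w x (EuclideanSpace.single 1 1) ^ 2 := by
  have hsides : (∫ t in C..D, (w !₂[A, t] + w !₂[B, t])) *
      (∫ s in A..B, (w !₂[s, C] + w !₂[s, D])) ≤ 0 := by
    rw [eq_neg_of_add_eq_zero_left hmean, neg_mul]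
    exact neg_nonpos.2 (mul_self_nonneg _)
  have hpartial : ∀ i : Fin 2, Continuous (Function.uncurry fun x y : ℝ =>
      fderiv ℝ w !₂[x, y] (EuclideanSpace.single i 1)) := fun i =>
    (continuous_fderiv_single i hw).comp (by fun_prop)
  have hsq : IntegrableOn (fun x => w x ^ 2) (openRectangle A B C D) :=
    integrableOn_openRectangle_of_continuous (hw.continuous.pow 2)
  rw [setIntegral_openRectangle hAB.le hCD.le hsq,
    setIntegral_openRectangle hAB.le hCD.le (integrableOn_openRectangle_fderiv_single_sq 0 hw),
    setIntegral_openRectangle hAB.le hCD.le (integrableOn_openRectangle_fderiv_single_sq 1 hw)]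
  exact integral_integral_sq_le_of_boundary (u := fun x y => w !₂[x, y]) hAB hCD
    (hw.continuous.comp (by fun_prop)) (hpartial 0) (hpartial 1)
    (hasDerivAt_comp_fst (hw.differentiable one_ne_zero))
    (hasDerivAt_comp_snd (hw.differentiable one_ne_zero)) hsides

theorem setIntegral_openRectangle_sq_le_of_boundaryIntegral_eq_zero (hAB : A < B) (hCD : C < D)
    {w : EuclideanSpace ℝ (Fin 2) → ℝ} (hw : ContDiff ℝ 1 w)
    (hmean : boundaryIntegral A B C D w = 0) :
    ∫ x in openRectangle A B C D, w x ^ 2 ≤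
      (π⁻¹ * max (B - A) (D - C)) ^ 2 * ∫ x in openRectangle A B C D, ‖gradient w x‖ ^ 2 := by
  rw [setIntegral_openRectangle_norm_gradient_sq hw, mul_add]
  refine (setIntegral_openRectangle_sq_le_add_of_boundaryIntegral_eq_zero
    hAB hCD hw hmean).trans ?_
  rw [div_eq_inv_mul, div_eq_inv_mul]
  gcongr
  exacts [le_max_left _ _, le_max_right _ _]

theorem isBoundaryPoincareConst_inv_pi_mul_max (hAB : A < B) (hCD : C < D) :
    IsBoundaryPoincareConst A B C D (π⁻¹ * max (B - A) (D - C)) := fun w hw hmean => by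
  have hK : 0 ≤ π⁻¹ * max (B - A) (D - C) :=
    mul_nonneg (inv_pos.2 pi_pos).le (le_max_of_le_left (sub_pos.2 hAB).le)
  refine (sqrt_le_sqrt
    (setIntegral_openRectangle_sq_le_of_boundaryIntegral_eq_zero hAB hCD hw hmean)).trans_eq ?_
  rw [sqrt_mul (sq_nonneg _), sqrt_sq hK]

theorem inv_pi_mul_le_of_sqrt_le {l m : ℝ} (hl : 0 < l) (hm : 0 < m)
    (h : √m ≤ K * √((π / l) ^ 2 * m)) : π⁻¹ * l ≤ K := by
  have hfreq : 0 < π / l := div_pos pi_pos hl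
  rw [sqrt_mul (sq_nonneg _), sqrt_sq hfreq.le, ← mul_assoc] at h
  have : 1 ≤ K * (π / l) := (le_mul_iff_one_le_left (sqrt_pos.2 hm)).1 h
  rwa [← div_le_iff₀ hfreq, one_div_div, div_eq_inv_mul] at this

namespace IsBoundaryPoincareConst

theorem inv_pi_mul_le_of_setIntegral_comp_apply (hK : IsBoundaryPoincareConst A B C D K)
    {i : Fin 2} {a b m : ℝ} (hab : a < b) (hm : 0 < m)
    (hfubini : ∀ f : ℝ → ℝ, Continuous f →
      ∫ x in openRectangle A B C D, f (x i) = m • ∫ t in a..b, f t)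
    (hmean : boundaryIntegral A B C D (fun x => halfWave a b (x i)) = 0) :
    π⁻¹ * (b - a) ≤ K := by
  have hL2 : ∫ x in openRectangle A B C D, halfWave a b (x i) ^ 2 = m * ((b - a) / 2) := by
    rw [hfubini (fun t => halfWave a b t ^ 2) (contDiff_halfWave.continuous (n := 0).pow 2),
      integral_halfWave_sq hab, smul_eq_mul]
  have henergy : ∫ x in openRectangle A B C D, ‖gradient (fun z => halfWave a b (z i)) x‖ ^ 2 =
      (π / (b - a)) ^ 2 * (m * ((b - a) / 2)) := by
    simp only [norm_gradient_comp_apply_sq_s4 i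
      (contDiff_halfWave.differentiable one_ne_zero).differentiableAt]
    rw [hfubini (fun t => deriv (halfWave a b) t ^ 2)
      ((contDiff_halfWave.continuous_deriv le_rfl).pow 2), integral_deriv_halfWave_sq hab,
      smul_eq_mul, mul_left_comm]
  have htest := hK (fun x => halfWave a b (x i)) (contDiff_halfWave.comp (by fun_prop)) hmean
  rw [hL2, henergy] at htest
  exact inv_pi_mul_le_of_sqrt_le (sub_pos.2 hab) (mul_pos hm (half_pos (sub_pos.2 hab))) htest

theorem inv_pi_mul_width_le (hK : IsBoundaryPoincareConst A B C D K) (hAB : A < B) (hCD : C < D) :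
    π⁻¹ * (B - A) ≤ K := by
  refine hK.inv_pi_mul_le_of_setIntegral_comp_apply hAB (sub_pos.2 hCD)
    (fun f hf => setIntegral_openRectangle_comp_fst hAB.le hCD.le hf) ?_
  simp [boundaryIntegral, halfWave_left_add_right hAB, ← two_mul, integral_halfWave hAB]

theorem inv_pi_mul_height_le (hK : IsBoundaryPoincareConst A B C D K) (hAB : A < B)
    (hCD : C < D) : π⁻¹ * (D - C) ≤ K := by
  refine hK.inv_pi_mul_le_of_setIntegral_comp_apply hCD (sub_pos.2 hAB)
    (fun f hf => setIntegral_openRectangle_comp_snd hAB.le hCD.le hf) ?_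
  simp [boundaryIntegral, halfWave_left_add_right hCD, ← two_mul, integral_halfWave hCD]

end IsBoundaryPoincareConst

theorem isLeast_isBoundaryPoincareConst (hAB : A < B) (hCD : C < D) :
    IsLeast {K | IsBoundaryPoincareConst A B C D K} (π⁻¹ * max (B - A) (D - C)) := by
  refine ⟨isBoundaryPoincareConst_inv_pi_mul_max hAB hCD, fun K hK => ?_⟩
  rw [mul_max_of_nonneg _ _ (inv_pos.2 pi_pos).le]
  exact max_le (hK.inv_pi_mul_width_le hAB hCD) (hK.inv_pi_mul_height_le hAB hCD)

end BoundaryPoincare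

/-- The sharp constant `C₁(Ω,Γ)` in `‖w‖_{L²(Ω)} ≤ C₁ ‖∇w‖_{L²(Ω)}` for functions
with zero mean trace on `Γ`, where `Ω = (−h₁/2,h₁/2) × (−h₂/2,h₂/2)` and
`Γ = ∂Ω` is the whole boundary of the rectangle, equals `(1/π) · max {h₁, h₂}`.
The mean over `∂Ω` is written as the sum of the integrals over the four sides. -/
theorem rectangle_whole_boundary_C1 (h₁ h₂ : ℝ) (hh₁ : 0 < h₁) (hh₂ : 0 < h₂) :
    IsLeast {C : ℝ |
      ∀ w : EuclideanSpace ℝ (Fin 2) → ℝ, ContDiff ℝ 1 w →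
        ((∫ t in (-(h₂/2))..(h₂/2), (w !₂[-(h₁/2), t] + w !₂[h₁/2, t])) +
         (∫ s in (-(h₁/2))..(h₁/2), (w !₂[s, -(h₂/2)] + w !₂[s, h₂/2]))) = 0 →
        Real.sqrt (∫ x in {x : EuclideanSpace ℝ (Fin 2) |
            x 0 ∈ Set.Ioo (-(h₁/2)) (h₁/2) ∧ x 1 ∈ Set.Ioo (-(h₂/2)) (h₂/2)},
            (w x) ^ 2) ≤
          C * Real.sqrt (∫ x in {x : EuclideanSpace ℝ (Fin 2) |
            x 0 ∈ Set.Ioo (-(h₁/2)) (h₁/2) ∧ x 1 ∈ Set.Ioo (-(h₂/2)) (h₂/2)},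
            ‖gradient w x‖ ^ 2)}
      (π⁻¹ * max h₁ h₂) := by
  have least := isLeast_isBoundaryPoincareConst (A := -(h₁ / 2)) (B := h₁ / 2) (C := -(h₂ / 2))
    (D := h₂ / 2) (neg_lt_self (half_pos hh₁)) (neg_lt_self (half_pos hh₂))
  rw [sub_neg_eq_add, sub_neg_eq_add, add_halves, add_halves] at least
  exact least
end
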